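/- Let H be a compact metrizable space, let n ≥ 1, and let v_1, …, v_{n+1} be n+1 distinct points of H. Let (X_1,d_1), …, (X_{n+1},d_{n+1}) be compact CAT(0) metric spaces with d_GH((X_i,d_i),(X_j,d_j)) > 0 for all distinct i, j. Then there exists a topological embedding Φ : H → 𝒵 (into the Gromov–Hausdorff space) such that Φ(v_i) = (X_i,d_i) for every i = 1, …, n+1. -/

import Mathlib

open GromovHausdorff

/-- A metric space is *geodesic* if any two points `x, y` are joined by a
geodesic, i.e. a map `γ : [0,1] → X` with `γ 0 = x`, `γ 1 = y` and
`dist (γ s) (γ t) = |s - t| * dist x y`. -/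
def IsGeodesicSpace (X : Type*) [MetricSpace X] : Prop :=
  ∀ x y : X, ∃ γ : ℝ → X, γ 0 = x ∧ γ 1 = y ∧
    ∀ s ∈ Set.Icc (0 : ℝ) 1, ∀ t ∈ Set.Icc (0 : ℝ) 1,
      dist (γ s) (γ t) = |s - t| * dist x y

/-- A metric space is *CAT(0)* if it is geodesic and satisfies the comparison
inequality with Euclidean comparison triangles; equivalently (and this is the
formulation used here), for every geodesic `γ` from `x` to `y` and every point
`z`, the comparison (CN) inequality
`dist z (γ t) ^ 2 ≤ (1 - t) * dist z x ^ 2 + t * dist z y ^ 2 - t * (1 - t) * dist x y ^ 2`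
holds for all `t ∈ [0,1]`. -/
def IsCAT0Space (X : Type*) [MetricSpace X] : Prop :=
  IsGeodesicSpace X ∧
  ∀ x y z : X, ∀ γ : ℝ → X, γ 0 = x → γ 1 = y →
    (∀ s ∈ Set.Icc (0 : ℝ) 1, ∀ t ∈ Set.Icc (0 : ℝ) 1,
      dist (γ s) (γ t) = |s - t| * dist x y) →
    ∀ t ∈ Set.Icc (0 : ℝ) 1,
      dist z (γ t) ^ 2 ≤
        (1 - t) * dist z x ^ 2 + t * dist z y ^ 2 - t * (1 - t) * dist x y ^ 2

/-!
Mapping `H` continuously into a bouquet of segments, with each `v i` going to the end of the `i`-th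
one, gives a continuous family of rescaled copies of the `X i`, equal to `X i` at `v i`. To tell
its members apart, attach to the copy at `h`, at two points realizing its diameter, two convex
planar regions (whiskers) whose length tends to `0` as `h` approaches some `v i`. Gluing at a
point preserves CAT(0). The tips of the whiskers are the only two points at distance equal to the
diameter of the resulting space, and the distances near a tip determine the germ of the function
whose graph bounds the whisker. Choosing this function to be analytic, with coefficients encoding
`h`, makes the family injective outside the `v i`.

The resulting map might still take the class of some `X i` outside the `v i`. Therefore the
coefficients encode an additional natural number `c`, so that different values of `c` give disjoint
images of the complement of the `v i`: only finitely many `c` have to be avoided.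
-/

/-! ### Geodesics and the CN inequality -/

section CAT0

variable {X Y : Type*} [MetricSpace X] [MetricSpace Y]

/-- `γ`, restricted to `[0, 1]`, is a geodesic from `x` to `y` parametrized proportionally to arc
length; its values outside `[0, 1]` are irrelevant. -/
def IsGeodesicPath (γ : ℝ → X) (x y : X) : Prop :=
  γ 0 = x ∧ γ 1 = y ∧ ∀ s ∈ Set.Icc (0 : ℝ) 1, ∀ t ∈ Set.Icc (0 : ℝ) 1,
    dist (γ s) (γ t) = |s - t| * dist x y

/-- `m` divides the pair `x`, `y` in the ratio `t : 1 - t`, as the point with parameter `t` on a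
geodesic from `x` to `y` does. -/
structure IsDivisionPoint (x y m : X) (t : ℝ) : Prop where
  mem_Icc : t ∈ Set.Icc (0 : ℝ) 1
  dist_left : dist x m = t * dist x y
  dist_right : dist m y = (1 - t) * dist x y

/-- The comparison inequality of Bruhat and Tits for the point `z` and the division point `m` of
the side `x`, `y` with parameter `t`. -/
def CNInequality (x y z m : X) (t : ℝ) : Prop :=
  dist z m ^ 2 ≤ (1 - t) * dist z x ^ 2 + t * dist z y ^ 2 - t * (1 - t) * dist x y ^ 2

theorem IsDivisionPoint.dist_add_dist {x y m : X} {t : ℝ} (h : IsDivisionPoint x y m t) :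
    dist x m + dist m y = dist x y := by
  rw [h.dist_left, h.dist_right]; ring

theorem IsDivisionPoint.symm {x y m : X} {t : ℝ} (h : IsDivisionPoint x y m t) :
    IsDivisionPoint y x m (1 - t) where
  mem_Icc := ⟨sub_nonneg.2 h.mem_Icc.2, sub_le_self _ h.mem_Icc.1⟩
  dist_left := by rw [dist_comm y m, dist_comm y x, h.dist_right]
  dist_right := by rw [dist_comm m x, dist_comm y x, h.dist_left, sub_sub_cancel]

theorem CNInequality.symm {x y z m : X} {t : ℝ} (h : CNInequality y x z m (1 - t)) :
    CNInequality x y z m t := by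
  unfold CNInequality at *
  rw [dist_comm x y]
  linarith

theorem IsGeodesicPath.map {γ : ℝ → X} {x y : X} (h : IsGeodesicPath γ x y) {f : X → Y} {r : ℝ}
    (hf : ∀ a b, dist (f a) (f b) = r * dist a b) : IsGeodesicPath (f ∘ γ) (f x) (f y) :=
  ⟨congrArg f h.1, congrArg f h.2.1, fun s hs t ht => by
    rw [Function.comp_apply, Function.comp_apply, hf, hf, h.2.2 s hs t ht]; ring⟩

theorem IsGeodesicPath.isDivisionPoint {γ : ℝ → X} {x y : X} (h : IsGeodesicPath γ x y) {t : ℝ}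
    (ht : t ∈ Set.Icc (0 : ℝ) 1) : IsDivisionPoint x y (γ t) t where
  mem_Icc := ht
  dist_left := by
    rw [← h.1, h.2.2 0 (by simp) t ht, h.1, zero_sub, abs_neg, abs_of_nonneg ht.1]
  dist_right := by
    rw [← h.2.1, h.2.2 t ht 1 (by simp), h.2.1, abs_sub_comm, abs_of_nonneg (sub_nonneg.2 ht.2)]

theorem isGeodesicPath_of_dist_le {γ : ℝ → X} {x y : X} (h0 : γ 0 = x) (h1 : γ 1 = y)
    (h : ∀ s t, 0 ≤ s → s ≤ t → t ≤ 1 → dist (γ s) (γ t) ≤ (t - s) * dist x y) :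
    IsGeodesicPath γ x y := by
  have heq : ∀ s t, 0 ≤ s → s ≤ t → t ≤ 1 → dist (γ s) (γ t) = |s - t| * dist x y := by
    intro s t hs hst ht
    have left := h 0 s le_rfl hs (hst.trans ht)
    have right := h t 1 (hs.trans hst) ht le_rfl
    have triangle := dist_triangle4 x (γ s) (γ t) y
    rw [h0] at left
    rw [h1] at right
    rw [abs_sub_comm, abs_of_nonneg (sub_nonneg.2 hst)]
    exact le_antisymm (h s t hs hst ht) (by linarith)
  refine ⟨h0, h1, fun s hs t ht => ?_⟩
  rcases le_total s t with hst | hts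
  · exact heq s t hs.1 hst ht.2
  · rw [dist_comm, abs_sub_comm, heq t s ht.1 hts hs.2]

theorem IsGeodesicPath.apply_dist_div_dist {γ : ℝ → X} {x y : X} (h : IsGeodesicPath γ x y) :
    γ (dist x y / dist x y) = y := by
  rcases eq_or_ne x y with rfl | hxy
  · simpa using h.1
  · rw [div_self (dist_ne_zero.2 hxy), h.2.1]

theorem IsGeodesicPath.dist_div_dist {γ : ℝ → X} {x y : X} (h : IsGeodesicPath γ x y) {u v : ℝ}
    (hu : 0 ≤ u) (huv : u ≤ v) (hv : v ≤ dist x y) :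
    dist (γ (u / dist x y)) (γ (v / dist x y)) = v - u := by
  have hd : 0 ≤ dist x y := dist_nonneg
  rw [h.2.2 _ ⟨div_nonneg hu hd, div_le_one_of_le₀ (huv.trans hv) hd⟩
    _ ⟨div_nonneg (hu.trans huv) hd, div_le_one_of_le₀ hv hd⟩, ← sub_div, abs_div, abs_of_nonneg hd,
    abs_sub_comm, abs_of_nonneg (sub_nonneg.2 huv)]
  exact div_mul_cancel_of_imp fun h0 => by linarith

theorem IsGeodesicPath.trans {γ₁ γ₂ : ℝ → X} {x m y : X} (h₁ : IsGeodesicPath γ₁ x m)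
    (h₂ : IsGeodesicPath γ₂ m y) (hadd : dist x m + dist m y = dist x y) :
    ∃ γ, IsGeodesicPath γ x y ∧ ∀ t, dist x m = t * dist x y → γ t = m := by
  set a := dist x m with ha
  set b := dist m y with hb
  set d := dist x y
  have ha0 : 0 ≤ a := dist_nonneg
  have hb0 : 0 ≤ b := dist_nonneg
  let γ : ℝ → X := fun t => if t * d ≤ a then γ₁ (t * d / a) else γ₂ ((t * d - a) / b)
  have hγ₁ : ∀ t, t * d ≤ a → γ t = γ₁ (t * d / a) := fun t ht => if_pos ht
  have hγm : ∀ t, a = t * d → γ t = m := fun t ht => by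
    rw [hγ₁ t ht.ge, ← ht, ha, h₁.apply_dist_div_dist]
  have hγ₂ : ∀ t, a ≤ t * d → γ t = γ₂ ((t * d - a) / b) := fun t ht => by
    rcases ht.eq_or_lt with heq | hlt
    · rw [hγm t heq, ← heq, sub_self, zero_div, h₂.1]
    · exact if_neg hlt.not_ge
  refine ⟨γ, isGeodesicPath_of_dist_le ?_ ?_ fun s t hs hst ht => ?_, hγm⟩
  · rw [hγ₁ 0 (by simpa using ha0), zero_mul, zero_div, h₁.1]
  · rw [hγ₂ 1 (by linarith), one_mul, ← hadd, add_sub_cancel_left, hb, h₂.apply_dist_div_dist]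
  have hd0 : 0 ≤ d := dist_nonneg
  have hsd : 0 ≤ s * d := mul_nonneg hs hd0
  have hst' : s * d ≤ t * d := mul_le_mul_of_nonneg_right hst hd0
  have htd : t * d ≤ d := mul_le_of_le_one_left hd0 ht
  have before : ∀ u v, 0 ≤ u → u ≤ v → v ≤ a → dist (γ₁ (u / a)) (γ₁ (v / a)) = v - u :=
    fun u v => h₁.dist_div_dist
  have after : ∀ u v, 0 ≤ u → u ≤ v → v ≤ b → dist (γ₂ (u / b)) (γ₂ (v / b)) = v - u :=
    fun u v => h₂.dist_div_dist
  rcases le_total (t * d) a with hta | hat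
  · rw [hγ₁ t hta, hγ₁ s (hst'.trans hta), before _ _ hsd hst' hta, sub_mul]
  rcases le_total a (s * d) with has | hsa
  · rw [hγ₂ t hat, hγ₂ s has, after _ _ (by linarith) (by linarith) (by linarith)]
    linarith
  · calc dist (γ s) (γ t) ≤ dist (γ s) m + dist m (γ t) := dist_triangle ..
      _ = (a - s * d) + ((t * d - a) - 0) := by
        congr 1
        · rw [hγ₁ s hsa, ← before _ _ hsd hsa le_rfl, ha, h₁.apply_dist_div_dist]
        · rw [hγ₂ t hat, ← after 0 _ le_rfl (by linarith) (by linarith), zero_div, h₂.1]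
      _ = (t - s) * d := by ring

theorem IsGeodesicSpace.exists_isGeodesicPath_of_isDivisionPoint (h : IsGeodesicSpace X)
    {x y m : X} {t : ℝ} (hm : IsDivisionPoint x y m t) :
    ∃ γ, IsGeodesicPath γ x y ∧ γ t = m := by
  obtain ⟨γ₁, h₁⟩ := h x m
  obtain ⟨γ₂, h₂⟩ := h m y
  obtain ⟨γ, hγ, hγm⟩ := IsGeodesicPath.trans h₁ h₂ hm.dist_add_dist
  exact ⟨γ, hγ, hγm t hm.dist_left⟩

theorem isCAT0Space_iff : IsCAT0Space X ↔ IsGeodesicSpace X ∧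
    ∀ (x y z m : X) (t : ℝ), IsDivisionPoint x y m t → CNInequality x y z m t := by
  refine ⟨fun h => ⟨h.1, fun x y z m t hm => ?_⟩, fun h => ⟨h.1, ?_⟩⟩
  · obtain ⟨γ, ⟨h0, h1, hγ⟩, rfl⟩ := h.1.exists_isGeodesicPath_of_isDivisionPoint hm
    exact h.2 x y z γ h0 h1 hγ t hm.mem_Icc
  · exact fun x y z γ h0 h1 hγ t ht =>
      h.2 x y z (γ t) t (IsGeodesicPath.isDivisionPoint ⟨h0, h1, hγ⟩ ht)

theorem IsCAT0Space.cnInequality (h : IsCAT0Space X) {x y m : X} {t : ℝ}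
    (hm : IsDivisionPoint x y m t) (z : X) : CNInequality x y z m t :=
  (isCAT0Space_iff.1 h).2 x y z m t hm

theorem IsCAT0Space.of_surjective_of_dist_eq_mul (hX : IsCAT0Space X) {f : X → Y}
    (hsurj : Function.Surjective f) {r : ℝ} (hr : 0 ≤ r)
    (hf : ∀ x y, dist (f x) (f y) = r * dist x y) : IsCAT0Space Y := by
  refine isCAT0Space_iff.2 ⟨hsurj.forall₂.2 fun x y => ?_, hsurj.forall₃.2 fun x y z =>
    hsurj.forall.2 fun m t hm => ?_⟩
  · obtain ⟨γ, hγ⟩ := hX.1 x y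
    exact ⟨f ∘ γ, IsGeodesicPath.map hγ hf⟩
  · rcases hr.eq_or_lt with rfl | hr
    · simp [CNInequality, hf]
    have hm' : IsDivisionPoint x y m t := by
      refine ⟨hm.mem_Icc, mul_left_cancel₀ hr.ne' ?_, mul_left_cancel₀ hr.ne' ?_⟩
      · rw [← hf, hm.dist_left, hf]; ring
      · rw [← hf, hm.dist_right, hf]; ring
    have hcn := mul_le_mul_of_nonneg_left (hX.cnInequality hm' z) (sq_nonneg r)
    simp only [CNInequality, hf, mul_pow]
    linarith

theorem IsCAT0Space.of_isometryEquiv (hX : IsCAT0Space X) (e : X ≃ᵢ Y) : IsCAT0Space Y :=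
  hX.of_surjective_of_dist_eq_mul e.surjective zero_le_one fun x y => by rw [e.dist_eq, one_mul]

theorem IsCAT0Space.image {S : Set X} (hS : IsCAT0Space S) {f : X → Y} (hf : Isometry f) :
    IsCAT0Space (f '' S) :=
  hS.of_surjective_of_dist_eq_mul (Set.surjective_mapsTo_image_restrict f S) zero_le_one
    fun x y => (hf.dist_eq x y).trans (one_mul _).symm

theorem IsCAT0Space.cnInequality_of_mem {S : Set X} (hS : IsCAT0Space S) {x y z m : X} {t : ℝ}
    (hx : x ∈ S) (hy : y ∈ S) (hz : z ∈ S) (hm : m ∈ S) (h : IsDivisionPoint x y m t) :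
    CNInequality x y z m t :=
  hS.cnInequality (x := ⟨x, hx⟩) (y := ⟨y, hy⟩) (m := ⟨m, hm⟩)
    ⟨h.mem_Icc, h.dist_left, h.dist_right⟩ ⟨z, hz⟩

theorem dist_lineMap_sq {V : Type*} [NormedAddCommGroup V] [InnerProductSpace ℝ V] (x y z : V)
    (t : ℝ) : dist z (AffineMap.lineMap x y t) ^ 2 =
      (1 - t) * dist z x ^ 2 + t * dist z y ^ 2 - t * (1 - t) * dist x y ^ 2 := by
  have hm : z - AffineMap.lineMap x y t = (1 - t) • (z - x) + t • (z - y) := by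
    rw [AffineMap.lineMap_apply_module]; module
  have hxy : x - y = (z - y) - (z - x) := by abel
  rw [dist_eq_norm, dist_eq_norm, dist_eq_norm, dist_eq_norm, hm, hxy]
  generalize z - x = u, z - y = w
  rw [norm_add_sq_real, norm_sub_sq_real, norm_smul, norm_smul, real_inner_smul_left,
    real_inner_smul_right, mul_pow, mul_pow, Real.norm_eq_abs, Real.norm_eq_abs, sq_abs, sq_abs,
    real_inner_comm]
  ring

theorem isCAT0Space_of_convex {V : Type*} [NormedAddCommGroup V] [InnerProductSpace ℝ V]
    {S : Set V} (hS : Convex ℝ S) : IsCAT0Space S := by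
  refine isCAT0Space_iff.2 ⟨fun x y => ?_, fun x y z m t hm => ?_⟩
  · let γ : ℝ → S := fun t =>
      let s := Set.projIcc (0 : ℝ) 1 zero_le_one t
      ⟨AffineMap.lineMap (x : V) y (s : ℝ), hS.lineMap_mem x.2 y.2 s.2⟩
    have hγ : ∀ t ∈ Set.Icc (0 : ℝ) 1, (γ t : V) = AffineMap.lineMap (x : V) y t :=
        fun t ht => by
      simp only [γ, Set.projIcc_of_mem zero_le_one ht]
    refine ⟨γ, Subtype.ext (by simp [hγ]), Subtype.ext (by simp [hγ]), fun s hs t ht => ?_⟩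
    rw [Subtype.dist_eq, hγ s hs, hγ t ht, dist_lineMap_lineMap, Real.dist_eq, Subtype.dist_eq]
  · have hm' : (m : V) = AffineMap.lineMap (x : V) y t :=
      eq_lineMap_of_dist_eq_mul_of_dist_eq_mul hm.dist_left hm.dist_right
    exact (hm' ▸ dist_lineMap_sq (x : V) y z t).le

end CAT0

/-! ### Wedges of CAT(0) sets -/

section Wedge

variable {A : Type*} [MetricSpace A] {S T : Set A} {o x y z m : A} {t : ℝ}

/-- `S ∪ T` is the wedge of `S` and `T` at the point `o`: the distance between the two sides is
that of a path through `o`. -/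
structure IsWedge (S T : Set A) (o : A) : Prop where
  mem_left : o ∈ S
  mem_right : o ∈ T
  dist_eq : ∀ a ∈ S, ∀ b ∈ T, dist a b = dist a o + dist o b

theorem IsWedge.symm (h : IsWedge S T o) : IsWedge T S o where
  mem_left := h.mem_right
  mem_right := h.mem_left
  dist_eq b hb a ha := by
    rw [dist_comm b a, h.dist_eq a ha b hb, dist_comm a o, dist_comm o b, add_comm]

theorem IsWedge.mem_left_of_isDivisionPoint (h : IsWedge S T o) (hx : x ∈ S) (hy : y ∈ S)
    (hm : m ∈ S ∪ T) (hdiv : IsDivisionPoint x y m t) : m ∈ S := by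
  rcases hm with hmS | hmT
  · exact hmS
  · have hxm := h.dist_eq x hx m hmT
    have hmy := h.symm.dist_eq m hmT y hy
    have hom : dist o m = 0 := by
      have := dist_triangle x o y
      have := hdiv.dist_add_dist
      have := dist_comm m o
      exact le_antisymm (by linarith) dist_nonneg
    exact dist_eq_zero.1 hom ▸ h.mem_left

theorem sq_add_le_of_sq_le {c f f₀ f₁ D : ℝ} (ht : t ∈ Set.Icc (0 : ℝ) 1) (hc : 0 ≤ c)
    (h₀ : 0 ≤ f₀) (h₁ : 0 ≤ f₁) (hD : |f₀ - f₁| ≤ D)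
    (h : f ^ 2 ≤ (1 - t) * f₀ ^ 2 + t * f₁ ^ 2 - t * (1 - t) * D ^ 2) :
    (c + f) ^ 2 ≤ (1 - t) * (c + f₀) ^ 2 + t * (c + f₁) ^ 2 - t * (1 - t) * D ^ 2 := by
  have ht0 : 0 ≤ t := ht.1
  have ht1 : 0 ≤ 1 - t := sub_nonneg.2 ht.2
  have hsq : (f₀ - f₁) ^ 2 ≤ D ^ 2 := sq_le_sq.2 (hD.trans (le_abs_self D))
  have hlin : f ≤ (1 - t) * f₀ + t * f₁ := by
    refine le_of_sq_le_sq ?_ (by positivity)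
    nlinarith [mul_le_mul_of_nonneg_left hsq (mul_nonneg ht0 ht1)]
  linarith [mul_le_mul_of_nonneg_left hlin hc]

theorem IsWedge.cnInequality_same_side (h : IsWedge S T o) (hS : IsCAT0Space S) (hx : x ∈ S)
    (hy : y ∈ S) (hz : z ∈ S ∪ T) (hm : m ∈ S ∪ T) (hdiv : IsDivisionPoint x y m t) :
    CNInequality x y z m t := by
  have hmS : m ∈ S := h.mem_left_of_isDivisionPoint hx hy hm hdiv
  rcases hz with hzS | hzT
  · exact hS.cnInequality_of_mem hx hy hzS hmS hdiv
  · unfold CNInequality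
    rw [h.symm.dist_eq z hzT m hmS, h.symm.dist_eq z hzT x hx, h.symm.dist_eq z hzT y hy]
    refine sq_add_le_of_sq_le hdiv.mem_Icc dist_nonneg dist_nonneg dist_nonneg ?_
      (hS.cnInequality_of_mem hx hy h.mem_left hmS hdiv)
    rw [dist_comm o x, dist_comm o y]
    exact abs_dist_sub_le x y o

theorem cn_rhs_eq (L R c e t : ℝ) :
    (1 - t) * e ^ 2 + t * (c + R) ^ 2 - t * (1 - t) * (L + R) ^ 2 =
      (1 - t) * (e ^ 2 - (L - c) ^ 2) + (t * (L + R) - (L - c)) ^ 2 := by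
  ring

theorem IsWedge.cnInequality_opposite_sides (h : IsWedge S T o) (hS : IsCAT0Space S)
    (hx : x ∈ S) (hy : y ∈ T) (hz : z ∈ S) (hm : m ∈ S ∪ T) (hdiv : IsDivisionPoint x y m t) :
    CNInequality x y z m t := by
  have hxm := hdiv.dist_left
  have hmy := hdiv.dist_right
  unfold CNInequality
  rw [h.dist_eq x hx y hy] at hxm hmy ⊢
  rw [h.dist_eq z hz y hy, cn_rhs_eq]
  set L := dist x o
  set R := dist o y
  set c := dist z o
  have hL : 0 ≤ L := dist_nonneg
  have hR : 0 ≤ R := dist_nonneg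
  have ht0 : 0 ≤ t := hdiv.mem_Icc.1
  have ht1 : 0 ≤ 1 - t := sub_nonneg.2 hdiv.mem_Icc.2
  have hLc : 0 ≤ dist z x ^ 2 - (L - c) ^ 2 := by
    rw [sub_nonneg, sq_le_sq, abs_of_nonneg (dist_nonneg (x := z)), abs_sub_comm]
    exact abs_dist_sub_le z x o
  by_cases hmT : m ∈ T
  · have hom : dist o m = t * (L + R) - L := by linarith [h.dist_eq x hx m hmT]
    have hzm : dist z m = t * (L + R) - (L - c) := by linarith [h.dist_eq z hz m hmT]
    rw [hzm]
    exact le_add_of_nonneg_left (mul_nonneg ht1 hLc)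
  · have hmS : m ∈ S := hm.resolve_right hmT
    have hmo : dist m o + R = (1 - t) * (L + R) := by rw [← hmy, h.dist_eq m hmS y hy]
    have hmo0 : 0 < dist m o := dist_pos.2 fun hmo => hmT (hmo ▸ h.mem_right)
    have hL0 : 0 < L := hL.lt_of_ne' fun hL0 => by
      rw [hL0] at hmo
      linarith [mul_nonneg ht0 hR]
    obtain ⟨s, hs⟩ : ∃ s, s * L = t * (L + R) := ⟨t * (L + R) / L, by field_simp⟩
    have hts : t ≤ s := le_of_mul_le_mul_right (by linarith [mul_nonneg ht0 hR]) hL0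
    have hs1 : s ≤ 1 := le_of_mul_le_mul_right (by linarith) hL0
    have hdiv' : IsDivisionPoint x o m s :=
      ⟨⟨ht0.trans hts, hs1⟩, by rw [hxm, hs], by linarith⟩
    have hcn : dist z m ^ 2 ≤ (1 - s) * dist z x ^ 2 + s * c ^ 2 - s * (1 - s) * L ^ 2 :=
      hS.cnInequality_of_mem hx h.mem_left hz hmS hdiv'
    calc dist z m ^ 2
        ≤ (1 - s) * dist z x ^ 2 + s * (c + 0) ^ 2 - s * (1 - s) * (L + 0) ^ 2 := by
          simpa only [add_zero] using hcn
      _ = (1 - s) * (dist z x ^ 2 - (L - c) ^ 2) + (t * (L + R) - (L - c)) ^ 2 := by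
          rw [cn_rhs_eq, add_zero, hs]
      _ ≤ (1 - t) * (dist z x ^ 2 - (L - c) ^ 2) + (t * (L + R) - (L - c)) ^ 2 := by
          gcongr

theorem IsWedge.cnInequality_left (h : IsWedge S T o) (hS : IsCAT0Space S) (hT : IsCAT0Space T)
    (hx : x ∈ S) (hy : y ∈ S ∪ T) (hz : z ∈ S ∪ T) (hm : m ∈ S ∪ T)
    (hdiv : IsDivisionPoint x y m t) : CNInequality x y z m t := by
  rcases hy with hy | hy
  · exact h.cnInequality_same_side hS hx hy hz hm hdiv
  rcases hz with hz | hz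
  · exact h.cnInequality_opposite_sides hS hx hy hz hm hdiv
  · exact (h.symm.cnInequality_opposite_sides hT hy hx hz hm.symm hdiv.symm).symm

theorem IsWedge.exists_isGeodesicPath (h : IsWedge S T o) (hS : IsGeodesicSpace S)
    (hT : IsGeodesicSpace T) (hx : x ∈ S) (hy : y ∈ S ∪ T) :
    ∃ γ : ℝ → ↥(S ∪ T), IsGeodesicPath γ ⟨x, Or.inl hx⟩ ⟨y, hy⟩ := by
  have inclS : ∀ a b : S, dist (Set.inclusion Set.subset_union_left a : ↥(S ∪ T))
      (Set.inclusion Set.subset_union_left b) = 1 * dist a b := fun a b => (one_mul _).symm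
  have inclT : ∀ a b : T, dist (Set.inclusion Set.subset_union_right a : ↥(S ∪ T))
      (Set.inclusion Set.subset_union_right b) = 1 * dist a b := fun a b => (one_mul _).symm
  rcases hy with hy | hy
  · obtain ⟨γ, hγ⟩ := hS ⟨x, hx⟩ ⟨y, hy⟩
    exact ⟨_, IsGeodesicPath.map hγ inclS⟩
  · obtain ⟨γ₁, hγ₁⟩ := hS ⟨x, hx⟩ ⟨o, h.mem_left⟩
    obtain ⟨γ₂, hγ₂⟩ := hT ⟨o, h.mem_right⟩ ⟨y, hy⟩
    obtain ⟨γ, hγ, -⟩ := (IsGeodesicPath.map hγ₁ inclS).trans (IsGeodesicPath.map hγ₂ inclT)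
      (h.dist_eq x hx y hy).symm
    exact ⟨γ, hγ⟩

theorem IsWedge.isCAT0Space_union (h : IsWedge S T o) (hS : IsCAT0Space S)
    (hT : IsCAT0Space T) : IsCAT0Space ↥(S ∪ T) := by
  rw [isCAT0Space_iff]
  constructor
  · rintro ⟨x, hx | hx⟩ ⟨y, hy⟩
    · exact h.exists_isGeodesicPath hS.1 hT.1 hx hy
    · obtain ⟨γ, hγ⟩ := h.symm.exists_isGeodesicPath hT.1 hS.1 hx hy.symm
      exact ⟨_, hγ.map (f := Set.inclusion (Set.union_comm T S).subset)
        fun a b => (one_mul (dist a b)).symm⟩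
  · rintro ⟨x, hx | hx⟩ ⟨y, hy⟩ ⟨z, hz⟩ ⟨m, hm⟩ t ⟨ht, hl, hr⟩
    · exact h.cnInequality_left hS hT hx hy hz hm ⟨ht, hl, hr⟩
    · exact h.symm.cnInequality_left hT hS hx hy.symm hz.symm hm.symm ⟨ht, hl, hr⟩

end Wedge

/-! ### Profiles -/

section Profile

open Topology

variable {a b : ℕ → ℝ} {x y : ℝ}

/-- The profile with coefficients `a`, the function whose graph and its mirror image bound a
whisker; its germ at `0` will be used to store the sequence `a`. -/
noncomputable def profile (a : ℕ → ℝ) (x : ℝ) : ℝ :=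
  x / 2 - ∑' k, a k * x ^ (k + 2)

/-- Coefficients that are nonnegative and small enough for `profile a` to be concave and
nondecreasing on `[0, 1]`. -/
def IsAdmissible (a : ℕ → ℝ) : Prop :=
  ∀ k, 0 ≤ a k ∧ (k + 2) * a k ≤ (1 / 2) ^ (k + 2)

theorem hasSum_one_half_pow_add_two : HasSum (fun k : ℕ => (1 / 2 : ℝ) ^ (k + 2)) (1 / 2) := by
  convert! (hasSum_nat_add_iff' 2).2 hasSum_geometric_two using 1
  norm_num [Finset.sum_range_succ]

theorem IsAdmissible.le_one_half_pow (ha : IsAdmissible a) (k : ℕ) : a k ≤ (1 / 2) ^ (k + 2) :=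
  (le_mul_of_one_le_left (ha k).1 (by norm_cast; lia)).trans (ha k).2

theorem IsAdmissible.mul_pow_mem_Icc (ha : IsAdmissible a) (hx : x ∈ Set.Icc (0 : ℝ) 1) (k : ℕ) :
    a k * x ^ (k + 2) ∈ Set.Icc 0 ((1 / 2 : ℝ) ^ (k + 2)) :=
  ⟨mul_nonneg (ha k).1 (pow_nonneg hx.1 _),
    (mul_le_of_le_one_right (ha k).1 (pow_le_one₀ hx.1 hx.2)).trans (ha.le_one_half_pow k)⟩

theorem IsAdmissible.summable_mul_pow (ha : IsAdmissible a) (hx : x ∈ Set.Icc (0 : ℝ) 1) :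
    Summable fun k => a k * x ^ (k + 2) :=
  .of_nonneg_of_le (fun k => (ha.mul_pow_mem_Icc hx k).1) (fun k => (ha.mul_pow_mem_Icc hx k).2)
    hasSum_one_half_pow_add_two.summable

theorem profile_zero (a : ℕ → ℝ) : profile a 0 = 0 := by
  simp [profile]

theorem IsAdmissible.profile_le_half (ha : IsAdmissible a) (hx : x ∈ Set.Icc (0 : ℝ) 1) :
    profile a x ≤ x / 2 :=
  sub_le_self _ (tsum_nonneg fun k => (ha.mul_pow_mem_Icc hx k).1)

theorem IsAdmissible.monotoneOn_profile (ha : IsAdmissible a) :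
    MonotoneOn (profile a) (Set.Icc 0 1) := by
  intro x hx y hy hxy
  have hterm : ∀ k, a k * y ^ (k + 2) - a k * x ^ (k + 2) ≤ (y - x) * (1 / 2) ^ (k + 2) := by
    intro k
    have hpow : y ^ (k + 2) - x ^ (k + 2) ≤ (y - x) * (k + 2) := by
      have := (le_abs_self _).trans (abs_pow_sub_pow_le y x (k + 2))
      rw [abs_of_nonneg (sub_nonneg.2 hxy), abs_of_nonneg hy.1, abs_of_nonneg hx.1,
        max_eq_left hxy] at this
      push_cast at this
      exact this.trans (mul_le_of_le_one_right (by have := sub_nonneg.2 hxy; positivity)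
        (pow_le_one₀ hy.1 hy.2))
    calc a k * y ^ (k + 2) - a k * x ^ (k + 2) = a k * (y ^ (k + 2) - x ^ (k + 2)) := by ring
      _ ≤ a k * ((y - x) * (k + 2)) := mul_le_mul_of_nonneg_left hpow (ha k).1
      _ = (y - x) * ((k + 2) * a k) := by ring
      _ ≤ (y - x) * (1 / 2) ^ (k + 2) :=
        mul_le_mul_of_nonneg_left (ha k).2 (sub_nonneg.2 hxy)
  have hsum := hasSum_le hterm
    ((ha.summable_mul_pow hy).hasSum.sub (ha.summable_mul_pow hx).hasSum)
    (hasSum_one_half_pow_add_two.mul_left (y - x))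
  unfold profile
  linarith

theorem IsAdmissible.profile_nonneg (ha : IsAdmissible a) (hx : x ∈ Set.Icc (0 : ℝ) 1) :
    0 ≤ profile a x :=
  profile_zero a ▸ ha.monotoneOn_profile ⟨le_rfl, zero_le_one⟩ hx hx.1

theorem IsAdmissible.concaveOn_profile (ha : IsAdmissible a) :
    ConcaveOn ℝ (Set.Icc 0 1) (profile a) := by
  have hconv : ConvexOn ℝ (Set.Icc 0 1) fun x => ∑' k, a k * x ^ (k + 2) := by
    refine ⟨convex_Icc 0 1, fun x hx y hy s t hs ht hst => ?_⟩
    refine hasSum_le (fun k => ?_)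
      (ha.summable_mul_pow (convex_Icc 0 1 hx hy hs ht hst)).hasSum
      (((ha.summable_mul_pow hx).hasSum.const_smul s).add
        ((ha.summable_mul_pow hy).hasSum.const_smul t))
    exact ((convexOn_pow (k + 2)).smul (ha k).1).2 hx.1 hy.1 hs ht hst
  have hlin : ConcaveOn ℝ (Set.Icc 0 1) fun x : ℝ => x / 2 :=
    ⟨convex_Icc 0 1, fun x _ y _ s t _ _ _ => by simp only [smul_eq_mul]; linarith⟩
  exact hlin.sub hconv

theorem continuous_profile {B : Type*} [TopologicalSpace B] {a : B → ℕ → ℝ} {x : B → ℝ}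
    (ha : ∀ p, IsAdmissible (a p)) (hac : ∀ k, Continuous fun p => a p k) (hxc : Continuous x)
    (hx : ∀ p, x p ∈ Set.Icc (0 : ℝ) 1) : Continuous fun p => profile (a p) (x p) := by
  refine (hxc.div_const 2).sub (continuous_tsum (fun k => (hac k).mul (hxc.pow (k + 2)))
    hasSum_one_half_pow_add_two.summable fun k p => ?_)
  obtain ⟨h0, h1⟩ := (ha p).mul_pow_mem_Icc (hx p) k
  rwa [Real.norm_of_nonneg h0]

theorem eq_zero_of_tsum_mul_pow_eventuallyEq_zero {c : ℕ → ℝ} {C : ℝ} (hc : ∀ n, |c n| ≤ C)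
    (h : ∀ᶠ x in 𝓝[>] (0 : ℝ), ∑' n, c n * x ^ n = 0) : c = 0 := by
  set p := FormalMultilinearSeries.ofScalars ℝ c with hp
  have hradius : 0 < p.radius := by
    have : ((1 : NNReal) : ENNReal) ≤ p.radius := p.le_radius_of_bound C fun n => by
      simpa [hp, FormalMultilinearSeries.ofScalars_norm] using hc n
    exact lt_of_lt_of_le (by simp) this
  have hseries := p.hasFPowerSeriesOnBall hradius
  have hsum : ∀ x, p.sum x = ∑' n, c n * x ^ n := fun x => by
    simpa [hp, FormalMultilinearSeries.ofScalarsSum] using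
      FormalMultilinearSeries.ofScalars_sum_eq (E := ℝ) c x
  have hfreq : ∃ᶠ x in 𝓝[≠] (0 : ℝ), p.sum x = 0 :=
    (h.mono fun x hx => (hsum x).trans hx).frequently.filter_mono
      (nhdsWithin_mono _ fun _ hx => ne_of_gt hx)
  have hzero := hseries.analyticAt.frequently_zero_iff_eventually_zero.1 hfreq
  exact (FormalMultilinearSeries.ofScalars_series_eq_zero ℝ).1
    (hseries.hasFPowerSeriesAt.congr (g := 0) hzero).eq_zero

theorem IsAdmissible.eq_of_profile_eventuallyEq (ha : IsAdmissible a) (hb : IsAdmissible b)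
    (h : profile a =ᶠ[𝓝[>] 0] profile b) : a = b := by
  refine sub_eq_zero.1 (eq_zero_of_tsum_mul_pow_eventuallyEq_zero (C := 1) (fun k => ?_) ?_)
  · have hpow : ((1 : ℝ) / 2) ^ (k + 2) ≤ 1 := pow_le_one₀ (by norm_num) (by norm_num)
    rw [Pi.sub_apply, abs_le]
    constructor <;> linarith [(ha k).1, (hb k).1, ha.le_one_half_pow k, hb.le_one_half_pow k]
  · filter_upwards [h, Ioo_mem_nhdsGT (zero_lt_one' ℝ)] with x hx hx01
    have hx' : x ∈ Set.Icc (0 : ℝ) 1 := Set.Ioo_subset_Icc_self hx01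
    have htail : x ^ 2 * ∑' k, (a - b) k * x ^ k = 0 := by
      rw [← tsum_mul_left]
      calc ∑' k, x ^ 2 * ((a - b) k * x ^ k)
          = ∑' k, (a k * x ^ (k + 2) - b k * x ^ (k + 2)) := by
            congr with k; rw [Pi.sub_apply]; ring
        _ = 0 := by
            rw [(ha.summable_mul_pow hx').tsum_sub (hb.summable_mul_pow hx')]
            unfold profile at hx
            linarith
    exact (mul_eq_zero.1 htail).resolve_left (pow_ne_zero 2 hx01.1.ne')

end Profile

/-! ### Whiskers -/

section Whisker

variable {A B : Type*} [MetricSpace A] [MetricSpace B] {a : ℕ → ℝ} {l x y : ℝ} {w : ℂ}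

/-- A whisker of length `l`: the convex planar region between the graph of `profile a` over
`[0, l]` and its mirror image. Its tip is `0` and its base point is `l`. -/
def whisker (a : ℕ → ℝ) (l : ℝ) : Set ℂ :=
  {w | 0 ≤ w.re ∧ w.re ≤ l ∧ |w.im| ≤ profile a w.re}

/-- Two points of `S` at distance `√(x ^ 2 + y ^ 2)` from `τ` are at distance `2 * y` from each
other, like the points `x ± y * I` and the point `0` of the plane. -/
def HasChord (S : Set A) (τ : A) (x y : ℝ) : Prop :=
  ∃ z ∈ S, ∃ w ∈ S, dist τ z ^ 2 = x ^ 2 + y ^ 2 ∧ dist τ w ^ 2 = x ^ 2 + y ^ 2 ∧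
    dist z w = 2 * y

theorem HasChord.map {S : Set A} {T : Set B} {τ : A} (hτ : τ ∈ S) (h : HasChord S τ x y)
    {f : S → T} (hf : Isometry f) : HasChord T (f ⟨τ, hτ⟩ : B) x y := by
  obtain ⟨z, hz, w, hw, hτz, hτw, hzw⟩ := h
  refine ⟨f ⟨z, hz⟩, (f _).2, f ⟨w, hw⟩, (f _).2, ?_⟩
  simp only [← Subtype.dist_eq, hf.dist_eq]
  exact ⟨hτz, hτw, hzw⟩

theorem dist_sq_eq_re_add_im (z w : ℂ) :
    dist z w ^ 2 = (z.re - w.re) ^ 2 + (z.im - w.im) ^ 2 := by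
  rw [Complex.dist_eq_re_im, Real.sq_sqrt (by positivity)]

theorem re_mem_Icc_of_mem_whisker (hl : l ≤ 1) (hw : w ∈ whisker a l) :
    w.re ∈ Set.Icc (0 : ℝ) 1 :=
  ⟨hw.1, hw.2.1.trans hl⟩

theorem convex_whisker (ha : IsAdmissible a) (hl : l ≤ 1) : Convex ℝ (whisker a l) := by
  intro z hz w hw s t hs ht hst
  have hre : (s • z + t • w).re = s • z.re + t • w.re := by simp
  have him : (s • z + t • w).im = s • z.im + t • w.im := by simp
  have hmem := convex_Icc 0 l ⟨hz.1, hz.2.1⟩ ⟨hw.1, hw.2.1⟩ hs ht hst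
  refine ⟨hre ▸ hmem.1, hre ▸ hmem.2, hre ▸ him ▸ ?_⟩
  calc |s • z.im + t • w.im| ≤ |s • z.im| + |t • w.im| := abs_add_le _ _
    _ = s • |z.im| + t • |w.im| := by simp only [smul_eq_mul, abs_mul, abs_of_nonneg, hs, ht]
    _ ≤ s • profile a z.re + t • profile a w.re := by gcongr <;> [exact hz.2.2; exact hw.2.2]
    _ ≤ profile a (s • z.re + t • w.re) := ha.concaveOn_profile.2
        (re_mem_Icc_of_mem_whisker hl hz) (re_mem_Icc_of_mem_whisker hl hw) hs ht hst

theorem zero_mem_whisker (hl : 0 ≤ l) : (0 : ℂ) ∈ whisker a l := by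
  simp [whisker, profile_zero, hl]

theorem ofReal_mem_whisker (ha : IsAdmissible a) (hl : l ∈ Set.Icc (0 : ℝ) 1) :
    (l : ℂ) ∈ whisker a l := by
  simp [whisker, hl.1, ha.profile_nonneg hl]

theorem eq_zero_of_mem_whisker_of_re_eq_zero (hw : w ∈ whisker a l) (h : w.re = 0) : w = 0 := by
  have him := hw.2.2
  rw [h, profile_zero] at him
  exact Complex.ext h (abs_nonpos_iff.1 him)

theorem dist_base_sq_add_le (ha : IsAdmissible a) (hl : l ≤ 1) (hw : w ∈ whisker a l) :
    dist w l ^ 2 + w.re ^ 2 / 2 ≤ l ^ 2 := by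
  have hre := re_mem_Icc_of_mem_whisker hl hw
  have him : w.im ^ 2 ≤ (w.re / 2) ^ 2 :=
    sq_le_sq.2 ((hw.2.2.trans (ha.profile_le_half hre)).trans (le_abs_self _))
  rw [dist_sq_eq_re_add_im, Complex.ofReal_re, Complex.ofReal_im]
  nlinarith [mul_nonneg hw.1 (sub_nonneg.2 hw.2.1)]

theorem dist_base_le (ha : IsAdmissible a) (hl : l ∈ Set.Icc (0 : ℝ) 1) (hw : w ∈ whisker a l) :
    dist w l ≤ l :=
  le_of_sq_le_sq (by linarith [dist_base_sq_add_le ha hl.2 hw, sq_nonneg w.re]) hl.1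

theorem eq_zero_of_dist_base_eq (ha : IsAdmissible a) (hl : l ≤ 1) (hw : w ∈ whisker a l)
    (h : dist w l = l) : w = 0 := by
  have hre := dist_base_sq_add_le ha hl hw
  rw [h] at hre
  exact eq_zero_of_mem_whisker_of_re_eq_zero hw
    (pow_eq_zero_iff two_ne_zero |>.1 (le_antisymm (by linarith) (sq_nonneg _)))

theorem hasChord_whisker_iff (ha : IsAdmissible a) (hl : l ≤ 1) (hx : x ∈ Set.Icc 0 l)
    (hy : 0 ≤ y) : HasChord (whisker a l) 0 x y ↔ y ≤ profile a x := by
  constructor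
  · rintro ⟨z, hz, w, hw, h0z, h0w, hzw⟩
    by_contra! hlt
    have lt_re : ∀ u ∈ whisker a l, dist 0 u ^ 2 = x ^ 2 + y ^ 2 → x < u.re := by
      intro u hu h0u
      by_contra! hux
      have him : |u.im| < |y| := calc
        |u.im| ≤ profile a u.re := hu.2.2
        _ ≤ profile a x := ha.monotoneOn_profile (re_mem_Icc_of_mem_whisker hl hu)
          ⟨hx.1, hx.2.trans hl⟩ hux
        _ < y := hlt
        _ = |y| := (abs_of_nonneg hy).symm
      rw [dist_sq_eq_re_add_im, Complex.zero_re, Complex.zero_im, zero_sub, zero_sub] at h0u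
      linarith [sq_lt_sq.2 him, pow_le_pow_left₀ hu.1 hux 2]
    have hadd : (2 * x) ^ 2 < (z.re + w.re) ^ 2 :=
      pow_lt_pow_left₀ (by linarith [lt_re z hz h0z, lt_re w hw h0w]) (by linarith [hx.1])
        two_ne_zero
    have hzw : dist z w ^ 2 = 4 * y ^ 2 := by rw [hzw]; ring
    rw [dist_sq_eq_re_add_im] at h0z h0w hzw
    simp only [Complex.zero_re, Complex.zero_im, zero_sub, neg_sq] at h0z h0w
    -- by the parallelogram law `‖z + w‖ = 2 * x`
    linarith [sq_nonneg (z.im + w.im)]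
  · intro hyx
    refine ⟨⟨x, y⟩, ⟨hx.1, hx.2, by rwa [abs_of_nonneg hy]⟩, ⟨x, -y⟩,
      ⟨hx.1, hx.2, by rwa [abs_neg, abs_of_nonneg hy]⟩, ?_, ?_, ?_⟩
    · rw [dist_sq_eq_re_add_im]; simp
    · rw [dist_sq_eq_re_add_im]; simp
    · rw [Complex.dist_of_re_eq (z := ⟨x, y⟩) (w := ⟨x, -y⟩) rfl, Real.dist_eq, sub_neg_eq_add,
        abs_of_nonneg (by positivity), two_mul]

/-- The parametrization of `whisker a l` by the rectangle `[0, 1] × [-1, 1]`. -/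
noncomputable def whiskerParam (a : ℕ → ℝ) (l : ℝ) (p : Set.Icc (0 : ℝ) 1 × Set.Icc (-1 : ℝ) 1) :
    ℂ :=
  ⟨p.1 * l, p.2 * profile a (p.1 * l)⟩

theorem range_whiskerParam (ha : IsAdmissible a) (hl : l ∈ Set.Icc (0 : ℝ) 1) :
    Set.range (whiskerParam a l) = whisker a l := by
  ext w
  constructor
  · rintro ⟨⟨s, t⟩, rfl⟩
    have hsl : s * l ∈ Set.Icc 0 l := ⟨mul_nonneg s.2.1 hl.1, mul_le_of_le_one_left hl.1 s.2.2⟩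
    have hp := ha.profile_nonneg ⟨hsl.1, hsl.2.trans hl.2⟩
    refine ⟨hsl.1, hsl.2, ?_⟩
    simp only [whiskerParam, abs_mul, abs_of_nonneg hp]
    exact mul_le_of_le_one_left hp (abs_le.2 t.2)
  · rintro ⟨h0, h1, him⟩
    have hs : w.re / l ∈ Set.Icc (0 : ℝ) 1 := ⟨div_nonneg h0 hl.1, div_le_one_of_le₀ h1 hl.1⟩
    have hsl : w.re / l * l = w.re :=
      div_mul_cancel_of_imp fun hl' => le_antisymm (h1.trans_eq hl') h0
    have hp : 0 ≤ profile a w.re := (abs_nonneg _).trans him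
    have ht : w.im / profile a w.re ∈ Set.Icc (-1 : ℝ) 1 := by
      rw [Set.mem_Icc, ← abs_le, abs_div, abs_of_nonneg hp]
      exact div_le_one_of_le₀ him hp
    have htp : w.im / profile a w.re * profile a w.re = w.im :=
      div_mul_cancel_of_imp fun hp' => abs_nonpos_iff.1 (him.trans_eq hp')
    exact ⟨(⟨_, hs⟩, ⟨_, ht⟩), Complex.ext hsl (by simp only [whiskerParam, hsl, htp])⟩

theorem continuous_whiskerParam {B : Type*} [TopologicalSpace B] {a : B → ℕ → ℝ} {l : B → ℝ}
    (ha : ∀ h, IsAdmissible (a h)) (hac : ∀ k, Continuous fun h => a h k) (hl : Continuous l)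
    (hl' : ∀ h, l h ∈ Set.Icc (0 : ℝ) 1) :
    Continuous (Function.uncurry fun h => whiskerParam (a h) (l h)) := by
  have hre : Continuous fun q : B × Set.Icc (0 : ℝ) 1 × Set.Icc (-1 : ℝ) 1 =>
      (q.2.1 : ℝ) * l q.1 := by
    fun_prop
  have him := continuous_profile (fun q => ha q.1) (fun k => (hac k).fst') hre
    fun q => unitInterval.mul_mem q.2.1.2 (hl' q.1)
  exact Complex.equivRealProdCLM.symm.continuous.comp
    (hre.prodMk (.mul (by fun_prop) him))

end Whisker

/-! ### Spaces with two whiskers -/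

section WhiskeredCore

open Topology

variable {E F : Type*} {a : ℕ → ℝ} {l x y : ℝ} {p : E} {b : Bool} {w : ℂ}

/-- The `ℓ¹`-product of `E` with two planes, one for each of the whiskers attached to a subset
of `E`. -/
abbrev Ambient (E : Type*) : Type _ :=
  WithLp 1 (E × PiLp 1 fun _ : Bool => ℂ)

/-- The inclusion of `E` in `Ambient E`. -/
def coreMap (x : E) : Ambient E :=
  WithLp.toLp 1 (x, 0)

/-- The inclusion in `Ambient E` of the plane with index `b`, placed over `p` so that the base
point `l` of a whisker of length `l` becomes `coreMap p`. -/
noncomputable def legMap (p : E) (l : ℝ) (b : Bool) (w : ℂ) : Ambient E :=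
  WithLp.toLp 1 (p, PiLp.single 1 b (w - l))

theorem legMap_length (p : E) (l : ℝ) (b : Bool) : legMap p l b l = coreMap p := by
  simp [legMap, coreMap]

theorem legMap_snd_of_ne {b' : Bool} (h : b' ≠ b) : (legMap p l b w).snd b' = 0 := by
  simp [legMap, h]

theorem norm_legMap_snd : ‖(legMap p l b w).snd‖ = dist w l := by
  rw [dist_eq_norm]
  exact PiLp.norm_single ..

variable [NormedAddCommGroup E] [NormedAddCommGroup F]

theorem isometry_coreMap : Isometry (coreMap : E → Ambient E) :=
  Isometry.of_dist_eq fun x y => by simp [coreMap]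

theorem isometry_legMap : Isometry (legMap p l b) :=
  Isometry.of_dist_eq fun z w => by
    simp [legMap, WithLp.prod_dist_eq_of_L1, PiLp.dist_single_same]

theorem continuous_legMap {B : Type*} [TopologicalSpace B] {p : B → E} {l : B → ℝ} {w : B → ℂ}
    (hp : Continuous p) (hl : Continuous l) (hw : Continuous w) :
    Continuous fun h => legMap (p h) (l h) b (w h) := by
  have hsingle : Continuous fun z : ℂ => (PiLp.single 1 b z : PiLp 1 fun _ : Bool => ℂ) :=
    (Isometry.of_dist_eq (PiLp.dist_single_same 1 (fun _ => ℂ) b)).continuous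
  exact (WithLp.prod_continuous_toLp ..).comp
    (hp.prodMk (hsingle.comp (hw.sub (Complex.continuous_ofReal.comp hl))))

theorem dist_legMap_of_snd_eq_zero {z : Ambient E} (hz : z.snd b = 0) :
    dist z (legMap p l b w) = dist z (coreMap p) + dist (coreMap p) (legMap p l b w) := by
  have hnorm : dist z.snd (PiLp.single 1 b (w - l)) = ‖z.snd‖ + ‖w - l‖ := by
    cases b <;>
      simp_all [PiLp.dist_eq_of_L1, PiLp.norm_eq_of_L1, add_comm, ← dist_eq_norm, dist_comm]
  rw [← legMap_length p l b, isometry_legMap.dist_eq, legMap_length, dist_comm (l : ℂ),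
    WithLp.prod_dist_eq_of_L1, WithLp.prod_dist_eq_of_L1]
  simp [legMap, coreMap, hnorm, dist_eq_norm w, add_assoc]

/-- A subset of `E` together with a pair of its points realizing its diameter, to which two
whiskers of the same shape are to be attached. -/
structure WhiskeredCore (E : Type*) [MetricSpace E] where
  core : Set E
  foot : Bool → E
  coeff : ℕ → ℝ
  length : ℝ
  foot_mem : ∀ b, foot b ∈ core
  dist_le_dist_foot : ∀ x ∈ core, ∀ y ∈ core, dist x y ≤ dist (foot false) (foot true)
  isAdmissible : IsAdmissible coeff
  length_mem : length ∈ Set.Icc (0 : ℝ) 1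

namespace WhiskeredCore

/-- The whisker attached at `C.foot b`. -/
def leg (C : WhiskeredCore E) (b : Bool) : Set (Ambient E) :=
  legMap (C.foot b) C.length b '' whisker C.coeff C.length

/-- The union of the core and the two whiskers. -/
def space (C : WhiskeredCore E) : Set (Ambient E) :=
  coreMap '' C.core ∪ C.leg false ∪ C.leg true

/-- The tip of the whisker attached at `C.foot b`. -/
noncomputable def tip (C : WhiskeredCore E) (b : Bool) : Ambient E :=
  legMap (C.foot b) C.length b 0

variable (C : WhiskeredCore E) (C' : WhiskeredCore F)

theorem mem_space_iff {z : Ambient E} :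
    z ∈ C.space ↔ z ∈ coreMap '' C.core ∨ ∃ b, z ∈ C.leg b := by
  simp [space, or_assoc]

theorem leg_subset_space (b : Bool) : C.leg b ⊆ C.space :=
  fun _ hz => C.mem_space_iff.2 (Or.inr ⟨b, hz⟩)

theorem tip_mem_leg (b : Bool) : C.tip b ∈ C.leg b :=
  ⟨0, zero_mem_whisker C.length_mem.1, rfl⟩

theorem tip_mem_space (b : Bool) : C.tip b ∈ C.space :=
  C.leg_subset_space b (C.tip_mem_leg b)

theorem coreMap_foot_mem_leg (b : Bool) : coreMap (C.foot b) ∈ C.leg b :=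
  ⟨C.length, ofReal_mem_whisker C.isAdmissible C.length_mem, legMap_length ..⟩

theorem snd_eq_zero_of_mem_core {z : Ambient E} (hz : z ∈ coreMap '' C.core) (b : Bool) :
    z.snd b = 0 := by
  obtain ⟨_, -, rfl⟩ := hz
  rfl

theorem snd_eq_zero_of_mem_leg {z : Ambient E} {b' : Bool} (hz : z ∈ C.leg b') (h : b ≠ b') :
    z.snd b = 0 := by
  obtain ⟨w, -, rfl⟩ := hz
  exact legMap_snd_of_ne h

theorem mem_leg_or_snd_eq_zero {z : Ambient E} (hz : z ∈ C.space) (b : Bool) :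
    z ∈ C.leg b ∨ z.snd b = 0 := by
  rcases C.mem_space_iff.1 hz with hz | ⟨b', hz⟩
  · exact Or.inr (C.snd_eq_zero_of_mem_core hz b)
  · rcases eq_or_ne b b' with rfl | h
    · exact Or.inl hz
    · exact Or.inr (C.snd_eq_zero_of_mem_leg hz h)

theorem isWedge_leg {S : Set (Ambient E)} (hS : ∀ z ∈ S, z.snd b = 0)
    (hfoot : coreMap (C.foot b) ∈ S) : IsWedge S (C.leg b) (coreMap (C.foot b)) where
  mem_left := hfoot
  mem_right := C.coreMap_foot_mem_leg b
  dist_eq := by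
    rintro z hz _ ⟨w, -, rfl⟩
    exact dist_legMap_of_snd_eq_zero (hS z hz)

theorem isCAT0Space_space (hC : IsCAT0Space C.core) : IsCAT0Space C.space := by
  have hleg (b : Bool) : IsCAT0Space (C.leg b) :=
    (isCAT0Space_of_convex (convex_whisker C.isAdmissible C.length_mem.2)).image
      isometry_legMap
  have hfoot (b : Bool) : coreMap (C.foot b) ∈ coreMap '' C.core := ⟨_, C.foot_mem b, rfl⟩
  have hfalse := C.isWedge_leg (fun z hz => C.snd_eq_zero_of_mem_core hz false) (hfoot false)
  have htrue : IsWedge (coreMap '' C.core ∪ C.leg false) (C.leg true)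
      (coreMap (C.foot true)) := by
    refine C.isWedge_leg (fun z hz => ?_) (Or.inl (hfoot true))
    rcases hz with hz | hz
    · exact C.snd_eq_zero_of_mem_core hz true
    · exact C.snd_eq_zero_of_mem_leg hz (by decide)
  exact htrue.isCAT0Space_union
    (hfalse.isCAT0Space_union (hC.image isometry_coreMap) (hleg false)) (hleg true)

theorem fst_mem_core {z : Ambient E} (hz : z ∈ C.space) : z.fst ∈ C.core := by
  rcases C.mem_space_iff.1 hz with ⟨x, hx, rfl⟩ | ⟨b, w, -, rfl⟩
  · exact hx
  · exact C.foot_mem b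

theorem norm_snd_le {z : Ambient E} (hz : z ∈ C.space) : ‖z.snd‖ ≤ C.length := by
  rcases C.mem_space_iff.1 hz with ⟨x, -, rfl⟩ | ⟨b, w, hw, rfl⟩
  · simpa [coreMap] using C.length_mem.1
  · exact norm_legMap_snd.trans_le (dist_base_le C.isAdmissible C.length_mem hw)

theorem exists_eq_tip_of_norm_snd_eq (hl : 0 < C.length) {z : Ambient E} (hz : z ∈ C.space)
    (h : ‖z.snd‖ = C.length) : ∃ b, z = C.tip b := by
  rcases C.mem_space_iff.1 hz with ⟨x, -, rfl⟩ | ⟨b, w, hw, rfl⟩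
  · simp [coreMap, hl.ne] at h
  · rw [norm_legMap_snd] at h
    rw [eq_zero_of_dist_base_eq C.isAdmissible C.length_mem.2 hw h]
    exact ⟨b, rfl⟩

theorem dist_le_add_norm_snd {z w : Ambient E} (hz : z ∈ C.space) (hw : w ∈ C.space) :
    dist z w ≤ dist (C.foot false) (C.foot true) + ‖z.snd‖ + ‖w.snd‖ := by
  rw [WithLp.prod_dist_eq_of_L1, add_assoc]
  exact add_le_add (C.dist_le_dist_foot _ (C.fst_mem_core hz) _ (C.fst_mem_core hw))
    (dist_le_norm_add_norm _ _)

theorem dist_le {z w : Ambient E} (hz : z ∈ C.space) (hw : w ∈ C.space) :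
    dist z w ≤ dist (C.foot false) (C.foot true) + 2 * C.length := by
  linarith [C.dist_le_add_norm_snd hz hw, C.norm_snd_le hz, C.norm_snd_le hw]

theorem exists_eq_tip_of_dist_eq (hl : 0 < C.length) {z w : Ambient E} (hz : z ∈ C.space)
    (hw : w ∈ C.space) (h : dist z w = dist (C.foot false) (C.foot true) + 2 * C.length) :
    ∃ b, z = C.tip b :=
  C.exists_eq_tip_of_norm_snd_eq hl hz (le_antisymm (C.norm_snd_le hz)
    (by linarith [C.dist_le_add_norm_snd hz hw, C.norm_snd_le hw]))

theorem dist_coreMap_foot_tip (b : Bool) : dist (coreMap (C.foot b)) (C.tip b) = C.length := by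
  rw [tip, ← legMap_length _ C.length b, isometry_legMap.dist_eq, dist_zero_right,
    Complex.norm_of_nonneg C.length_mem.1]

theorem dist_tip_tip :
    dist (C.tip false) (C.tip true) = dist (C.foot false) (C.foot true) + 2 * C.length := by
  rw [tip, tip, dist_legMap_of_snd_eq_zero (legMap_snd_of_ne (by decide)), dist_comm (legMap ..),
    dist_legMap_of_snd_eq_zero (by rfl), isometry_coreMap.dist_eq, dist_comm (C.foot true)]
  have := C.dist_coreMap_foot_tip
  simp only [tip] at this
  rw [this, this]
  ring

theorem mem_leg_of_dist_tip_lt {z : Ambient E} (hz : z ∈ C.space)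
    (h : dist (C.tip b) z < C.length) : z ∈ C.leg b := by
  refine (C.mem_leg_or_snd_eq_zero hz b).resolve_right fun hzb => h.not_ge ?_
  rw [dist_comm, tip, dist_legMap_of_snd_eq_zero hzb, ← tip, dist_coreMap_foot_tip]
  exact le_add_of_nonneg_left dist_nonneg

theorem hasChord_space_iff (b : Bool) (hx : 0 ≤ x) (hy : 0 ≤ y)
    (hxy : x ^ 2 + y ^ 2 < C.length ^ 2) :
    HasChord C.space (C.tip b) x y ↔ y ≤ profile C.coeff x := by
  have hl := C.length_mem
  have hxl : x ≤ C.length := le_of_sq_le_sq (by linarith [sq_nonneg y]) hl.1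
  rw [← hasChord_whisker_iff C.isAdmissible hl.2 ⟨hx, hxl⟩ hy]
  constructor
  · rintro ⟨z, hz, w, hw, hτz, hτw, hzw⟩
    have mem_leg {u} (hu : u ∈ C.space) (h : dist (C.tip b) u ^ 2 = x ^ 2 + y ^ 2) :
        u ∈ C.leg b :=
      C.mem_leg_of_dist_tip_lt hu (lt_of_pow_lt_pow_left₀ 2 hl.1 (h.trans_lt hxy))
    obtain ⟨z, hz', rfl⟩ := mem_leg hz hτz
    obtain ⟨w, hw', rfl⟩ := mem_leg hw hτw
    rw [tip, isometry_legMap.dist_eq] at hτz hτw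
    rw [isometry_legMap.dist_eq] at hzw
    exact ⟨z, hz', w, hw', hτz, hτw, hzw⟩
  · intro h
    exact h.map (zero_mem_whisker hl.1)
      (f := fun w => ⟨_, C.leg_subset_space b (Set.mem_image_of_mem _ w.2)⟩)
      fun z w => isometry_legMap (p := C.foot b) (z : ℂ) w

theorem dist_foot_add_le_of_isometry {f : C.space → C'.space} (hf : Isometry f) :
    dist (C.foot false) (C.foot true) + 2 * C.length ≤
      dist (C'.foot false) (C'.foot true) + 2 * C'.length := by
  rw [← C.dist_tip_tip]
  exact (hf.dist_eq ⟨_, C.tip_mem_space false⟩ ⟨_, C.tip_mem_space true⟩).symm.trans_le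
    (C'.dist_le (f _).2 (f _).2)

theorem exists_apply_tip_eq (hl' : 0 < C'.length) (e : C.space ≃ᵢ C'.space) :
    ∃ b, (e ⟨C.tip false, C.tip_mem_space false⟩ : Ambient F) = C'.tip b := by
  refine C'.exists_eq_tip_of_dist_eq hl' (e _).2 (e ⟨C.tip true, C.tip_mem_space true⟩).2 ?_
  rw [← Subtype.dist_eq, e.dist_eq, Subtype.dist_eq, C.dist_tip_tip]
  exact le_antisymm (C.dist_foot_add_le_of_isometry C' e.isometry)
    (C'.dist_foot_add_le_of_isometry C e.symm.isometry)

theorem hasChord_space_iff_of_isometryEquiv (e : C.space ≃ᵢ C'.space)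
    (z : C.space) :
    HasChord C.space z x y ↔ HasChord C'.space (e z) x y :=
  ⟨fun h => h.map z.2 e.isometry, fun h => by simpa using h.map (e z).2 e.symm.isometry⟩

theorem coeff_eq_of_isometryEquiv (hl : 0 < C.length) (hl' : 0 < C'.length)
    (e : C.space ≃ᵢ C'.space) : C.coeff = C'.coeff := by
  obtain ⟨b, hb⟩ := C.exists_apply_tip_eq C' hl' e
  refine C.isAdmissible.eq_of_profile_eventuallyEq C'.isAdmissible ?_
  have hsmall : ∀ᶠ x : ℝ in 𝓝[>] 0, 2 * x < C.length ∧ 2 * x < C'.length ∧ 0 < x := by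
    filter_upwards [Ioo_mem_nhdsGT (half_pos hl), Ioo_mem_nhdsGT (half_pos hl')] with x hx hx'
    exact ⟨by linarith [hx.2], by linarith [hx'.2], hx.1⟩
  filter_upwards [hsmall] with x ⟨hx, hx', hx0⟩
  have hx1 : x ∈ Set.Icc (0 : ℝ) 1 := ⟨hx0.le, by linarith [C.length_mem.2]⟩
  have key (y : ℝ) (hy : 0 ≤ y) (hyx : y ≤ x / 2) :
      y ≤ profile C.coeff x ↔ y ≤ profile C'.coeff x := by
    rw [← C.hasChord_space_iff false hx0.le hy (by nlinarith),
      ← C'.hasChord_space_iff b hx0.le hy (by nlinarith), ← hb]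
    exact C.hasChord_space_iff_of_isometryEquiv C' e ⟨_, C.tip_mem_space false⟩
  exact le_antisymm
    ((key _ (C.isAdmissible.profile_nonneg hx1) (C.isAdmissible.profile_le_half hx1)).1 le_rfl)
    ((key _ (C'.isAdmissible.profile_nonneg hx1) (C'.isAdmissible.profile_le_half hx1)).2 le_rfl)

theorem space_eq_of_length_eq_zero (h : C.length = 0) : C.space = coreMap '' C.core := by
  refine subset_antisymm (fun z hz => ?_) (fun z hz => C.mem_space_iff.2 (Or.inl hz))
  have hz0 : z.snd = 0 := norm_le_zero_iff.1 ((C.norm_snd_le hz).trans_eq h)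
  exact ⟨z.fst, C.fst_mem_core hz, by rw [coreMap, ← hz0]; rfl⟩

theorem nonempty_isometryEquiv_space_of_length_eq_zero {A : Type*} [MetricSpace A]
    (h : C.length = 0) {f : A → E} (hf : Isometry f) (hcore : C.core = Set.range f) :
    Nonempty (A ≃ᵢ C.space) := by
  rw [C.space_eq_of_length_eq_zero h, hcore, ← Set.range_comp]
  exact ⟨(isometry_coreMap.comp hf).isometryEquivOnRange⟩

end WhiskeredCore

end WhiskeredCore

/-! ### Continuous families -/

section Families

open TopologicalSpace

variable {B P E : Type*} [TopologicalSpace B]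

theorem exists_continuous_nonemptyCompacts_eq_range {Y : Type*} [TopologicalSpace Y]
    [TopologicalSpace P] [CompactSpace P] [Nonempty P] {f : B → P → Y}
    (hf : Continuous f.uncurry) :
    ∃ K : B → NonemptyCompacts Y, Continuous K ∧ ∀ h, (K h : Set Y) = Set.range (f h) := by
  have hfh (h : B) : Continuous (f h) := hf.comp (Continuous.prodMk_right h)
  refine ⟨fun h => (⊤ : NonemptyCompacts P).map (f h) (hfh h),
    continuous_const.nonemptyCompacts_map' hf, fun h => ?_⟩
  rw [NonemptyCompacts.coe_map, NonemptyCompacts.coe_top, Set.image_univ]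

theorem exists_continuous_nonemptyCompacts_eq_space [NormedAddCommGroup E] [TopologicalSpace P]
    [CompactSpace P] [Nonempty P] {C : B → WhiskeredCore E} {f : B → P → E}
    (hf : Continuous f.uncurry) (hcore : ∀ h, (C h).core = Set.range (f h))
    (hfoot : ∀ b, Continuous fun h => (C h).foot b)
    (hcoeff : ∀ k, Continuous fun h => (C h).coeff k) (hlength : Continuous fun h => (C h).length) :
    ∃ K : B → NonemptyCompacts (Ambient E),
      Continuous K ∧ ∀ h, (K h : Set (Ambient E)) = (C h).space := by
  have hcoreMap : Continuous (Function.uncurry fun (h : B) (p : P) => coreMap (f h p)) :=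
    isometry_coreMap.continuous.comp hf
  have hlegMap (b : Bool) : Continuous (Function.uncurry fun h p =>
      legMap ((C h).foot b) (C h).length b (whiskerParam (C h).coeff (C h).length p)) := by
    have hparam := continuous_whiskerParam (fun h => (C h).isAdmissible) hcoeff hlength
      fun h => (C h).length_mem
    exact continuous_legMap ((hfoot b).comp continuous_fst) (hlength.comp continuous_fst) hparam
  obtain ⟨K, hK, hKeq⟩ := exists_continuous_nonemptyCompacts_eq_range hcoreMap
  have : Nonempty (Set.Icc (-1 : ℝ) 1) := ⟨0, by norm_num⟩
  choose L hL hLeq using fun b => exists_continuous_nonemptyCompacts_eq_range (hlegMap b)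
  refine ⟨fun h => K h ⊔ L false h ⊔ L true h, (hK.sup (hL false)).sup (hL true), fun h => ?_⟩
  have hleg (b : Bool) : (L b h : Set (Ambient E)) = (C h).leg b := by
    rw [hLeq, WhiskeredCore.leg, ← range_whiskerParam (C h).isAdmissible (C h).length_mem,
      ← Set.range_comp]
    rfl
  rw [NonemptyCompacts.coe_sup, NonemptyCompacts.coe_sup, hKeq, hleg, hleg, WhiskeredCore.space,
    hcore, ← Set.range_comp]
  rfl

end Families

section Axes

variable {ι H E : Type*} {X : ι → Type*}

theorem exists_continuous_eq_single [TopologicalSpace H] [T4Space H] [Finite ι]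
    [Nonempty ι] [DecidableEq ι] {v : ι → H} (hv : Function.Injective v) :
    ∃ ρ : H → ι → ℝ, Continuous ρ ∧ (∀ h, ∃ i r, ρ h = Pi.single i r) ∧
      ∀ i, ρ (v i) = Pi.single i 1 := by
  obtain ⟨U, hU, hdisj⟩ := (Set.finite_range v).t2_separation
  choose ρ hρ0 hρ1 _ using fun i => exists_continuous_zero_one_of_isClosed
    (hU (v i)).2.isClosed_compl (isClosed_singleton (x := v i))
    (Set.disjoint_singleton_right.2 fun h => h (hU (v i)).1)
  have hsingle {h i} (hh : h ∈ U (v i)) : (fun j => ρ j h) = Pi.single i (ρ i h) := by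
    ext j
    rcases eq_or_ne j i with rfl | hji
    · rw [Pi.single_eq_same]
    · rw [Pi.single_eq_of_ne hji]
      refine hρ0 j fun hj => Set.disjoint_left.1 (hdisj ?_ ?_ (hv.ne hji)) hj hh <;>
        exact Set.mem_range_self _
  refine ⟨fun h i => ρ i h, continuous_pi fun i => (ρ i).continuous, fun h => ?_, fun i => ?_⟩
  · by_cases! hh : ∃ i, h ∈ U (v i)
    · exact ⟨_, _, hsingle hh.choose_spec⟩
    · exact ⟨Classical.arbitrary ι, 0, by
        rw [Pi.single_zero]; exact funext fun i => hρ0 i (hh i)⟩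
  · exact (hsingle (hU (v i)).1).trans (congrArg _ (hρ1 i rfl))

variable [NormedAddCommGroup E] [NormedSpace ℝ E]

theorem IsCAT0Space.range_smul {A : Type*} [MetricSpace A] (hA : IsCAT0Space A) {f : A → E}
    (hf : Isometry f) (r : ℝ) : IsCAT0Space (Set.range fun x => r • f x) := by
  refine hA.of_surjective_of_dist_eq_mul Set.rangeFactorization_surjective (abs_nonneg r)
    fun x y => ?_
  simp [Subtype.dist_eq, dist_smul₀, hf.dist_eq]

variable [Fintype ι] {f : ∀ i, X i → E}

/-- The image of the product of the `X i` under a combination of maps `f i : X i → E`. If `t` has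
a single nonzero coordinate `t i` and the `f i` are isometries, the range is a copy of `X i` scaled
by `|t i|`. -/
def combination (f : ∀ i, X i → E) (t : ι → ℝ) (x : ∀ i, X i) : E :=
  ∑ i, t i • f i (x i)

theorem continuous_combination [∀ i, TopologicalSpace (X i)] (hf : ∀ i, Continuous (f i)) :
    Continuous (combination f).uncurry := by
  unfold combination
  fun_prop

variable [DecidableEq ι]

theorem combination_single (f : ∀ i, X i → E) (i : ι) (r : ℝ) (x : ∀ i, X i) :
    combination f (Pi.single i r) x = r • f i (x i) := by
  simp [combination, Pi.single_apply]

theorem range_combination_single [∀ i, Nonempty (X i)] (f : ∀ i, X i → E) (i : ι) (r : ℝ) :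
    Set.range (combination f (Pi.single i r)) = Set.range fun x => r • f i x := by
  rw [← (Function.surjective_eval i).range_comp]
  exact congrArg Set.range (funext (combination_single f i r))

variable [∀ i, MetricSpace (X i)]

theorem dist_combination_single (hf : ∀ i, Isometry (f i)) (i : ι) (r : ℝ) (x y : ∀ i, X i) :
    dist (combination f (Pi.single i r) x) (combination f (Pi.single i r) y) =
      |r| * dist (x i) (y i) := by
  rw [combination_single, combination_single, dist_smul₀, (hf i).dist_eq, Real.norm_eq_abs]

end Axes

section Markers

open TopologicalSpace

variable {Y : Type*} [MetricSpace Y] [SeparableSpace Y] [Nonempty Y]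

/-- An admissible sequence of coefficients encoding the point `y` by its truncated distances to a
dense sequence. -/
noncomputable def distCoeff (y : Y) (k : ℕ) : ℝ :=
  (1 / 2) ^ (k + 2) / (k + 2) * min 1 (dist y (denseSeq Y k))

theorem isAdmissible_distCoeff (y : Y) : IsAdmissible (distCoeff y) := by
  refine fun k => ⟨by unfold distCoeff; positivity, ?_⟩
  rw [distCoeff, ← mul_assoc, mul_div_cancel₀ _ (by positivity)]
  exact mul_le_of_le_one_right (by positivity) (min_le_left _ _)

theorem continuous_distCoeff (k : ℕ) : Continuous fun y : Y => distCoeff y k := by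
  unfold distCoeff
  fun_prop

theorem distCoeff_injective : Function.Injective (distCoeff (Y := Y)) := by
  intro y y' h
  have hmin : (fun z => min 1 (dist y z)) = fun z => min 1 (dist y' z) := by
    refine (denseRange_denseSeq Y).equalizer (by fun_prop) (by fun_prop) (funext fun k => ?_)
    exact mul_left_cancel₀ (by positivity) (congrFun h k)
  have hy : min 1 (dist y y') = 0 := (congrFun hmin y').trans (by simp)
  exact dist_eq_zero.1 ((min_eq_iff.1 hy).resolve_left fun h => one_ne_zero h.1).1

end Markers

/-! ### The embedding -/

section Embedding

open TopologicalSpace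

theorem exists_forall_dist_le (A : Type*) [MetricSpace A] [CompactSpace A] [Nonempty A] :
    ∃ p : Bool → A, ∀ x y : A, dist x y ≤ dist (p false) (p true) := by
  obtain ⟨⟨p, q⟩, -, h⟩ := isCompact_univ.exists_isMaxOn Set.univ_nonempty
    (continuous_dist (α := A)).continuousOn
  exact ⟨fun b => cond b q p, fun x y => h (Set.mem_univ (x, y))⟩

variable {A B E : Type*} [MetricSpace A] [TopologicalSpace B] [NormedAddCommGroup E]

theorem exists_continuous_isometryEquiv_rep {K : B → NonemptyCompacts A} (hK : Continuous K)
    {S : B → Set A} (h : ∀ b, (K b : Set A) = S b) :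
    ∃ Φ : B → GHSpace, Continuous Φ ∧ ∀ b, Nonempty (S b ≃ᵢ (Φ b).Rep) := by
  refine ⟨fun b => (K b).toGHSpace, toGHSpace_continuous.comp hK, fun b => ?_⟩
  have e : Nonempty (K b ≃ᵢ (K b).toGHSpace.Rep) :=
    toGHSpace_eq_toGHSpace_iff_isometryEquiv.1 (GHSpace.toGHSpace_rep _).symm
  rw [← h b]
  exact e

variable {ι : Type*} [DecidableEq ι] {X : ι → Type*} [∀ i, MetricSpace (X i)] [NormedSpace ℝ E]

/-- The copy of some `X i` scaled by `|t i|` that is parametrized by `combination f t`, with feet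
at the images of the points `p b`. -/
def combinationCore [Fintype ι] {f : ∀ i, X i → E} (hf : ∀ i, Isometry (f i)) {p : Bool → ∀ i, X i}
    (hp : ∀ i (x y : X i), dist x y ≤ dist (p false i) (p true i)) {t : ι → ℝ}
    (ht : ∃ i r, t = Pi.single i r) {a : ℕ → ℝ} (ha : IsAdmissible a) {l : ℝ}
    (hl : l ∈ Set.Icc (0 : ℝ) 1) : WhiskeredCore E where
  core := Set.range (combination f t)
  foot b := combination f t (p b)
  coeff := a
  length := l
  foot_mem b := ⟨p b, rfl⟩
  dist_le_dist_foot := by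
    obtain ⟨i, r, rfl⟩ := ht
    rintro _ ⟨x, rfl⟩ _ ⟨y, rfl⟩
    rw [dist_combination_single hf, dist_combination_single hf]
    exact mul_le_mul_of_nonneg_left (hp i _ _) (abs_nonneg r)
  isAdmissible := ha
  length_mem := hl

variable [∀ i, CompactSpace (X i)] [∀ i, Nonempty (X i)] [Finite ι]

theorem exists_continuous_isCAT0Space_rep (hX : ∀ i, IsCAT0Space (X i)) {ρ : B → ι → ℝ}
    (hρ : Continuous ρ) (hsingle : ∀ h, ∃ i r, ρ h = Pi.single i r) {a : B → ℕ → ℝ}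
    (ha : ∀ h, IsAdmissible (a h)) (hac : ∀ k, Continuous fun h => a h k) {l : B → ℝ}
    (hl : Continuous l) (hl' : ∀ h, l h ∈ Set.Icc (0 : ℝ) 1) :
    ∃ Φ : B → GHSpace, Continuous Φ ∧ (∀ h, IsCAT0Space (Φ h).Rep) ∧
      (∀ h i, ρ h = Pi.single i 1 → l h = 0 → Φ h = toGHSpace (X i)) ∧
      ∀ h h', 0 < l h → 0 < l h' → Φ h = Φ h' → a h = a h' := by
  cases nonempty_fintype ι
  choose p hp using fun i => exists_forall_dist_le (X i)
  have hf (i : ι) : Isometry (kuratowskiEmbedding (X i)) := kuratowskiEmbedding.isometry _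
  let C (h : B) := combinationCore hf (p := fun b i => p i b) hp (hsingle h) (ha h) (hl' h)
  have hcomb : Continuous
      (Function.uncurry fun h => combination (fun i => kuratowskiEmbedding (X i)) (ρ h)) :=
    (continuous_combination fun i => (hf i).continuous).comp (hρ.prodMap continuous_id)
  obtain ⟨K, hK, hKeq⟩ := exists_continuous_nonemptyCompacts_eq_space (C := C)
    hcomb (fun _ => rfl) (fun b => hcomb.comp (Continuous.prodMk_left _)) hac hl
  obtain ⟨Φ, hΦ, e⟩ := exists_continuous_isometryEquiv_rep hK hKeq
  have hcore {h i r} (hr : ρ h = Pi.single i r) :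
      (C h).core = Set.range fun x => r • kuratowskiEmbedding (X i) x :=
    (congrArg (fun t => Set.range (combination _ t)) hr).trans (range_combination_single _ i r)
  refine ⟨Φ, hΦ, fun h => ?_, fun h i hi h0 => ?_, fun h h' hpos hpos' heq => ?_⟩
  · obtain ⟨i, r, hr⟩ := hsingle h
    refine ((C h).isCAT0Space_space ?_).of_isometryEquiv (e h).some
    rw [hcore hr]
    exact (hX i).range_smul (hf i) r
  · obtain ⟨e'⟩ := (C h).nonempty_isometryEquiv_space_of_length_eq_zero h0 (hf i)
      (by simpa only [one_smul] using hcore hi)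
    rw [← (Φ h).toGHSpace_rep]
    exact toGHSpace_eq_toGHSpace_iff_isometryEquiv.2 ⟨(e'.trans (e h).some).symm⟩
  · have e' := (e h).some
    rw [heq] at e'
    exact (C h).coeff_eq_of_isometryEquiv (C h') hpos hpos' (e'.trans (e h').some.symm)

end Embedding

theorem exists_injective_of_injOn_compl_range {α β γ ι : Type*} [Infinite α] [Finite ι]
    {F : α × β → γ} {v : ι → β} {w : ι → γ} (hF : Set.InjOn F (Prod.snd ⁻¹' (Set.range v)ᶜ))
    (hFv : ∀ a i, F (a, v i) = w i) (hw : Function.Injective w) :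
    ∃ a, Function.Injective fun b => F (a, b) := by
  obtain ⟨a, ha⟩ : ∃ a, ∀ b ∉ Set.range v, ∀ i, F (a, b) ≠ w i := by
    by_contra! h
    choose b hb i hi using h
    obtain ⟨a, a', hne, heq⟩ := Finite.exists_ne_map_eq_of_infinite i
    have hF' : F (a, b a) = F (a', b a') := by rw [hi, hi, heq]
    exact hne (congrArg Prod.fst (hF (hb a) (hb a') hF'))
  refine ⟨a, fun b b' (heq : F (a, b) = F (a, b')) => ?_⟩
  by_cases hb : b ∈ Set.range v <;> by_cases hb' : b' ∈ Set.range v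
  · obtain ⟨i, rfl⟩ := hb
    obtain ⟨j, rfl⟩ := hb'
    rw [hFv, hFv] at heq
    exact congrArg v (hw heq)
  · obtain ⟨i, rfl⟩ := hb
    exact absurd (heq.symm.trans (hFv a i)) (ha b' hb' i)
  · obtain ⟨i, rfl⟩ := hb'
    exact absurd (heq.trans (hFv a i)) (ha b hb i)
  · exact congrArg Prod.snd (hF hb hb' heq)

theorem exists_continuous_injOn_compl_range {ι H : Type*} [Finite ι] [Nonempty ι] [MetricSpace H]
    [TopologicalSpace.SeparableSpace H] {v : ι → H} (hv : Function.Injective v) {X : ι → Type*}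
    [∀ i, MetricSpace (X i)] [∀ i, CompactSpace (X i)] [∀ i, Nonempty (X i)]
    (hX : ∀ i, IsCAT0Space (X i)) :
    ∃ F : ℕ × H → GHSpace, Continuous F ∧ (∀ p, IsCAT0Space (F p).Rep) ∧
      (∀ c i, F (c, v i) = toGHSpace (X i)) ∧
      Set.InjOn F (Prod.snd ⁻¹' (Set.range v)ᶜ) := by
  classical
  obtain ⟨ρ, hρ, hsingle, hρv⟩ := exists_continuous_eq_single hv
  have hpos {h : H} (hh : h ∉ Set.range v) : 0 < min 1 (Metric.infDist h (Set.range v)) :=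
    lt_min one_pos (((Set.finite_range v).isClosed.notMem_iff_infDist_pos
      (Set.range_nonempty v)).1 hh)
  have : Nonempty H := ‹Nonempty ι›.map v
  obtain ⟨F, hF, hcat, hFv, hinj⟩ := exists_continuous_isCAT0Space_rep (B := ℕ × H) hX
    (hρ.comp continuous_snd) (fun p => hsingle p.2) isAdmissible_distCoeff continuous_distCoeff
    (l := fun p => min 1 (Metric.infDist p.2 (Set.range v)))
    (continuous_const.min ((Metric.continuous_infDist_pt _).comp continuous_snd))
    (fun p => ⟨le_min zero_le_one Metric.infDist_nonneg, min_le_left _ _⟩)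
  refine ⟨F, hF, hcat, fun c i => hFv _ i (hρv i) ?_, fun p hp q hq heq =>
    distCoeff_injective (hinj p q (hpos hp) (hpos hq) heq)⟩
  simp [Metric.infDist_zero_of_mem (Set.mem_range_self i)]

/-- Let `H` be a compact metrizable space, `n ≥ 1`, and
`v 0, …, v n` be `n+1` distinct points of `H`.  Let `X 0, …, X n` be compact
CAT(0) (nonempty) metric spaces with positive pairwise Gromov–Hausdorff
distances.  Then there is a topological embedding `Φ` of `H` into the subset
`𝒵` of the Gromov–Hausdorff space consisting of compact CAT(0) metric spaces
such that `Φ (v i)` is the isometry class of `X i`. -/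
theorem statement3 {H : Type*} [TopologicalSpace H] [CompactSpace H]
    [TopologicalSpace.MetrizableSpace H]
    (n : ℕ) (hn : 1 ≤ n) (v : Fin (n + 1) → H) (hv : Function.Injective v)
    (X : Fin (n + 1) → Type) [∀ i, MetricSpace (X i)] [∀ i, CompactSpace (X i)]
    [∀ i, Nonempty (X i)]
    (hcat : ∀ i, IsCAT0Space (X i))
    (hdist : ∀ i j, i ≠ j → 0 < ghDist (X i) (X j)) :
    ∃ Φ : H → GHSpace,
      Topology.IsEmbedding Φ ∧
      (∀ h : H, IsCAT0Space (Φ h).Rep) ∧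
      ∀ i, Φ (v i) = toGHSpace (X i) := by
  let _ : MetricSpace H := TopologicalSpace.metrizableSpaceMetric H
  obtain ⟨F, hF, hFcat, hFv, hFinj⟩ := exists_continuous_injOn_compl_range hv hcat
  have hX : Function.Injective fun i => toGHSpace (X i) := fun i j hij => by
    by_contra hne
    exact (hdist i j hne).ne' (dist_eq_zero.2 hij)
  obtain ⟨c, hc⟩ := exists_injective_of_injOn_compl_range hFinj hFv hX
  have hΦ : Continuous fun h => F (c, h) := hF.comp (Continuous.prodMk_right c)
  exact ⟨fun h => F (c, h), (hΦ.isClosedEmbedding hc).isEmbedding, fun h => hFcat (c, h), hFv c⟩
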